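/- If a graph G has no antitriangle (no independent set of size 3) and has exactly one coloring of size χ(G), then G has a shallow clique minor of size χ(G); in particular s(G) ≥ |V(G)|/2. -/

import Mathlib

open SimpleGraph

/-- `A` is an anticlique (independent set) of `G`. -/
def IsAnticlique {V : Type*} (G : SimpleGraph V) (A : Finset V) : Prop :=
  ∀ x ∈ A, ∀ y ∈ A, ¬ G.Adj x y

/-- A coloring of `G`: a partition of the vertex set into nonempty anticliques. -/
def IsColoring {V : Type*} (G : SimpleGraph V) (c : Finset (Finset V)) : Prop :=
  (∀ A ∈ c, A.Nonempty) ∧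
  (∀ A ∈ c, ∀ B ∈ c, A ≠ B → Disjoint A B) ∧
  (∀ v : V, ∃ A ∈ c, v ∈ A) ∧
  (∀ A ∈ c, IsAnticlique G A)

/-- `A` induces a connected subgraph of `G`. -/
def ConnSet {V : Type*} (G : SimpleGraph V) (A : Finset V) : Prop :=
  (G.induce (↑A : Set V)).Connected

/-- A Kempe-coloring: any two distinct classes induce a connected subgraph. -/
def IsKempe {V : Type*} [DecidableEq V] (G : SimpleGraph V) (c : Finset (Finset V)) : Prop :=
  IsColoring G c ∧ ∀ A ∈ c, ∀ B ∈ c, A ≠ B → ConnSet G (A ∪ B)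

/-- Two vertex sets are adjacent if some edge joins them. -/
def SetsAdj {V : Type*} (G : SimpleGraph V) (A B : Finset V) : Prop :=
  ∃ a ∈ A, ∃ b ∈ B, G.Adj a b

/-- A clique minor: pairwise disjoint, pairwise adjacent, nonempty connected subsets. -/
def IsCliqueMinor {V : Type*} (G : SimpleGraph V) (K : Finset (Finset V)) : Prop :=
  (∀ A ∈ K, A.Nonempty) ∧ (∀ A ∈ K, ConnSet G A) ∧
  (∀ A ∈ K, ∀ B ∈ K, A ≠ B → Disjoint A B ∧ SetsAdj G A B)

/-- A shallow clique minor: a clique minor all of whose branch sets have size 1 or 2. -/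
def IsShallowCliqueMinor {V : Type*} (G : SimpleGraph V) (K : Finset (Finset V)) : Prop :=
  IsCliqueMinor G K ∧ ∀ A ∈ K, A.card ≤ 2

/-- `T` is a transversal of the family `K`: it meets each member in exactly one vertex. -/
def Traversed {V : Type*} [DecidableEq V] (T : Finset V) (K : Finset (Finset V)) : Prop :=
  ∀ A ∈ K, (T ∩ A).card = 1

/-- `c` is a coloring of `G` of minimum size, i.e. of size `χ(G)`. -/
def MinColoring {V : Type*} (G : SimpleGraph V) (c : Finset (Finset V)) : Prop :=
  IsColoring G c ∧ ∀ d, IsColoring G d → c.card ≤ d.card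

/-- `G` has no antitriangle (independent set of size 3). -/
def HasNoAntitriangle {V : Type*} (G : SimpleGraph V) : Prop :=
  ¬ ∃ A : Finset V, A.card = 3 ∧ IsAnticlique G A

/-!
Fix the unique coloring `C`. Its classes have at most two elements, so write class `i` as
`{a i, b i}`, where `a i = b i` is allowed. Uniqueness is used through recolorings:

* if `a i` and `a j` are nonadjacent, then `b i` and `b j` are adjacent, since otherwise
  `{a i, a j}` and `{b i, b j}` could replace the classes `i` and `j`;
* every nonempty set `X` of colors has a member `j` such that `b j` is adjacent to `a k` for all
  other `k ∈ X`, since otherwise some of the `b j` could be shifted along a cycle of colors.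

A shallow clique minor is built greedily, with every branch set containing some `a i`. Among the
remaining colors choose `j` by the second fact. If `a j` is adjacent to all other remaining `a k`,
then `{a j}` is a branch set and `j` is removed. Otherwise choose `k`, again by the second fact,
among the remaining colors with `a k` not adjacent to `a j`; then `{a j, b k}` and `{a k, b j}` are
branch sets, joined to each other by the edge between `b j` and `b k`, and `j` and `k` are removed.
-/

theorem exists_subset_injOn_mapsTo {ι : Type*} {f : ι → ι} {s : Finset ι} (hs : s.Nonempty)
    (hf : Set.MapsTo f s s) :
    ∃ t ⊆ s, t.Nonempty ∧ Set.MapsTo f t t ∧ Set.InjOn f t := by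
  classical
  obtain ⟨t, hts, ⟨htne, htf⟩, htmin⟩ := exists_minimal_le_of_wellFoundedLT
    (fun t : Finset ι => t.Nonempty ∧ Set.MapsTo f t t) s ⟨hs, hf⟩
  have himage : t.image f ⊆ t := Finset.image_subset_iff.2 htf
  have heq : t.image f = t := himage.antisymm <| htmin
    ⟨htne.image f, fun _ hi => Finset.mem_image_of_mem f (himage hi)⟩ himage
  exact ⟨t, hts, htne, htf, Finset.card_image_iff.1 (congrArg Finset.card heq)⟩

section ShallowCliqueMinor

variable {V : Type*} {G : SimpleGraph V} {K : Finset (Finset V)} {A B : Finset V}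

theorem connSet_singleton (x : V) : ConnSet G {x} := by
  rw [ConnSet, Finset.coe_singleton, induce_singleton_eq_top]
  exact connected_top

theorem connSet_pair [DecidableEq V] {x y : V} (h : G.Adj x y) : ConnSet G {x, y} := by
  rw [ConnSet, Finset.coe_pair]
  exact induce_pair_connected_of_adj h

theorem SetsAdj.symm (h : SetsAdj G A B) : SetsAdj G B A :=
  let ⟨x, hx, y, hy, hxy⟩ := h
  ⟨y, hy, x, hx, hxy.symm⟩

theorem isShallowCliqueMinor_empty : IsShallowCliqueMinor G ∅ := by
  simp [IsShallowCliqueMinor, IsCliqueMinor]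

theorem IsShallowCliqueMinor.insert [DecidableEq V] (hK : IsShallowCliqueMinor G K)
    (hne : A.Nonempty) (hconn : ConnSet G A) (hcard : A.card ≤ 2)
    (hA : ∀ B ∈ K, Disjoint A B ∧ SetsAdj G A B) : IsShallowCliqueMinor G (insert A K) := by
  obtain ⟨⟨hKne, hKconn, hKpair⟩, hKcard⟩ := hK
  refine ⟨⟨?_, ?_, ?_⟩, ?_⟩
  · exact Finset.forall_mem_insert _ _ _ |>.2 ⟨hne, hKne⟩
  · exact Finset.forall_mem_insert _ _ _ |>.2 ⟨hconn, hKconn⟩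
  · intro B hB B' hB' hBB'
    rcases Finset.mem_insert.1 hB with rfl | hBK <;>
      rcases Finset.mem_insert.1 hB' with rfl | hBK'
    · exact absurd rfl hBB'
    · exact hA B' hBK'
    · exact ⟨(hA B hBK).1.symm, (hA B hBK).2.symm⟩
    · exact hKpair B hBK B' hBK' hBB'
  · exact Finset.forall_mem_insert _ _ _ |>.2 ⟨hcard, hKcard⟩

theorem notMem_of_forall_disjoint (hne : A.Nonempty) (hA : ∀ B ∈ K, Disjoint A B) : A ∉ K :=
  fun hAK => hne.ne_empty (disjoint_self.1 (hA A hAK))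

theorem HasNoAntitriangle.adj_of_not_adj (hG : HasNoAntitriangle G) {x y z : V} (hxy : x ≠ y)
    (hyz : y ≠ z) (hxz : x ≠ z) (hnxy : ¬ G.Adj x y) (hnyz : ¬ G.Adj y z) : G.Adj x z := by
  classical
  by_contra hnxz
  refine hG ⟨{x, y, z}, Finset.card_eq_three.2 ⟨x, y, z, hxy, hxz, hyz, rfl⟩, ?_⟩
  simp [IsAnticlique, G.adj_comm y x, G.adj_comm z x, G.adj_comm z y, hnxy, hnyz, hnxz]

end ShallowCliqueMinor

/-- A coloring that is unique up to renaming colors: every coloring with the same palette has the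
same color classes. -/
def IsUniqueColoring {V ι : Type*} {G : SimpleGraph V} (C : G.Coloring ι) : Prop :=
  ∀ D : G.Coloring ι, Setoid.ker D = Setoid.ker C

/-- Color class `i` of `C` is `{a i, b i}`; a one-element class has `a i = b i`. -/
def EnumeratesClasses {V ι : Type*} {G : SimpleGraph V} (C : G.Coloring ι) (a b : ι → V) : Prop :=
  ∀ i v, C v = i ↔ v = a i ∨ v = b i

section UniqueColoring

variable {V ι : Type*} {G : SimpleGraph V} {C : G.Coloring ι} {a b : ι → V} {i j k : ι}

section Recolor

variable {s : Set V} {e : ι → ι} {x y : V}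

open Classical in
/-- The coloring obtained from `C` by moving each vertex of `s` from its color `i` to `e i`. -/
noncomputable def recolor (C : G.Coloring ι) (s : Set V) (e : ι → ι) (he : Set.InjOn e (C '' s))
    (hs : ∀ x ∈ s, ∀ y ∉ s, C y = e (C x) → ¬ G.Adj x y) : G.Coloring ι :=
  Coloring.mk (fun v => if v ∈ s then e (C v) else C v) <| by
    intro x y hxy heq
    split_ifs at heq with hx hy hy
    · exact C.valid hxy (he ⟨x, hx, rfl⟩ ⟨y, hy, rfl⟩ heq)
    · exact hs x hx y hy heq.symm hxy
    · exact hs y hy x hx heq hxy.symm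
    · exact C.valid hxy heq

theorem recolor_of_mem {he : Set.InjOn e (C '' s)}
    {hs : ∀ x ∈ s, ∀ y ∉ s, C y = e (C x) → ¬ G.Adj x y} (hx : x ∈ s) :
    recolor C s e he hs x = e (C x) :=
  if_pos hx

theorem recolor_of_notMem {he : Set.InjOn e (C '' s)}
    {hs : ∀ x ∈ s, ∀ y ∉ s, C y = e (C x) → ¬ G.Adj x y} (hx : x ∉ s) :
    recolor C s e he hs x = C x :=
  if_neg hx

theorem IsUniqueColoring.exists_adj_of_injOn (hC : IsUniqueColoring C)
    (he : Set.InjOn e (C '' s)) (hx : x ∈ s) (hy : y ∉ s) (hxy : C y = e (C x))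
    (hne : C x ≠ C y) : ∃ x' ∈ s, ∃ y' ∉ s, C y' = e (C x') ∧ G.Adj x' y' := by
  by_contra! hs
  have hker : Setoid.ker (recolor C s e he hs) x y :=
    Setoid.ker_def.2 (by rw [recolor_of_mem hx, recolor_of_notMem hy, hxy])
  exact hne (Setoid.ker_def.1 (hC _ ▸ hker))

theorem IsUniqueColoring.exists_adj_of_color_ne (hC : IsUniqueColoring C) (hxy : C x ≠ C y) :
    ∃ z, C z = C y ∧ G.Adj x z := by
  obtain ⟨x', hx', z, -, hz, hadj⟩ := hC.exists_adj_of_injOn (s := {x}) (e := fun _ => C y)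
    (by simp) rfl (fun hyx => hxy (congrArg C hyx).symm) rfl hxy
  exact ⟨z, hz, Set.mem_singleton_iff.1 hx' ▸ hadj⟩

end Recolor

theorem HasNoAntitriangle.exists_enumeratesClasses (hG : HasNoAntitriangle G)
    (hC : Function.Surjective C) : ∃ a b, EnumeratesClasses C a b := by
  suffices h : ∀ i, ∃ x y, ∀ v, C v = i ↔ v = x ∨ v = y by
    choose a b hab using h
    exact ⟨a, b, hab⟩
  intro i
  obtain ⟨x, rfl⟩ := hC i
  by_cases hx : ∃ y, y ≠ x ∧ C y = C x
  · obtain ⟨y, hyx, hy⟩ := hx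
    refine ⟨x, y, fun v => ⟨fun hv => ?_, ?_⟩⟩
    · by_contra! hne
      exact C.valid (hG.adj_of_not_adj hne.1 hyx.symm hne.2 (fun h => C.valid h hv)
        (fun h => C.valid h hy.symm)) (hv.trans hy.symm)
    · rintro (rfl | rfl)
      exacts [rfl, hy]
  · push Not at hx
    refine ⟨x, x, fun v => ⟨fun hv => ?_, ?_⟩⟩
    · exact Or.inl (by_contra fun hne => hx v hne hv)
    · rintro (rfl | rfl) <;> rfl

namespace EnumeratesClasses

theorem color_left (hab : EnumeratesClasses C a b) (i : ι) : C (a i) = i :=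
  (hab i _).2 (Or.inl rfl)

theorem color_right (hab : EnumeratesClasses C a b) (i : ι) : C (b i) = i :=
  (hab i _).2 (Or.inr rfl)

theorem left_ne_left (hab : EnumeratesClasses C a b) (hij : i ≠ j) : a i ≠ a j :=
  fun h => hij (by simpa only [hab.color_left] using congrArg C h)

theorem right_ne_right (hab : EnumeratesClasses C a b) (hij : i ≠ j) : b i ≠ b j :=
  fun h => hij (by simpa only [hab.color_right] using congrArg C h)

theorem left_ne_right (hab : EnumeratesClasses C a b) (hij : i ≠ j) : a i ≠ b j :=
  fun h => hij (by simpa only [hab.color_left, hab.color_right] using congrArg C h)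

theorem card_le_two_mul [Fintype V] [Fintype ι] (hab : EnumeratesClasses C a b) :
    Fintype.card V ≤ 2 * Fintype.card ι := by
  have hsurj : Function.Surjective (Sum.elim a b) := fun v =>
    (((hab (C v) v).1 rfl).elim (fun h => ⟨Sum.inl (C v), h.symm⟩)
      (fun h => ⟨Sum.inr (C v), h.symm⟩))
  simpa only [Fintype.card_sum, two_mul] using Fintype.card_le_of_surjective _ hsurj

theorem adj_of_left_eq_right (hab : EnumeratesClasses C a b) (hC : IsUniqueColoring C)
    (hi : a i = b i) {x : V} (hx : x ≠ a i) : G.Adj x (a i) := by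
  have hclass : ∀ v, C v = C (a i) → v = a i := fun v hv =>
    ((hab i v).1 (hv.trans (hab.color_left i))).elim id fun h => h.trans hi.symm
  obtain ⟨z, hz, hadj⟩ := hC.exists_adj_of_color_ne (fun h => hx (hclass x h))
  exact hclass z hz ▸ hadj

theorem left_ne_right_of_not_adj (hab : EnumeratesClasses C a b) (hC : IsUniqueColoring C)
    {x : V} (hx : C x ≠ i) (hnadj : ¬ G.Adj x (a i)) : a i ≠ b i := by
  refine fun hi => hnadj (hab.adj_of_left_eq_right hC hi ?_)
  rintro rfl
  exact hx (hab.color_left i)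

theorem adj_right_of_not_adj_left (hab : EnumeratesClasses C a b) (hC : IsUniqueColoring C)
    (hij : i ≠ j) (hnadj : ¬ G.Adj (a i) (a j)) : G.Adj (b i) (b j) := by
  classical
  have hi : a i ≠ b i := hab.left_ne_right_of_not_adj hC (x := a j)
    (by rwa [hab.color_left, ne_comm]) (fun h => hnadj h.symm)
  -- Trade `b i` for `a j`, turning the two classes into `{a i, a j}` and `{b i, b j}`.
  obtain ⟨x, hx, y, hy, hxy, hadj⟩ := hC.exists_adj_of_injOn (s := {b i, a j})
    (Equiv.swap i j).injective.injOn (x := a j) (y := a i) (by simp)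
    (by simp [hi, hab.left_ne_left hij]) (by simp [hab.color_left])
    (by simpa only [hab.color_left] using hij.symm)
  simp only [Set.mem_insert_iff, Set.mem_singleton_iff, not_or] at hx hy
  rcases hx with rfl | rfl
  · rw [hab.color_right, Equiv.swap_apply_left] at hxy
    exact ((hab j y).1 hxy).resolve_left hy.2 ▸ hadj
  · rw [hab.color_left, Equiv.swap_apply_right] at hxy
    exact absurd (((hab i y).1 hxy).resolve_right hy.1 ▸ hadj.symm) hnadj

theorem exists_adj_of_mapsTo (hab : EnumeratesClasses C a b) (hC : IsUniqueColoring C)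
    {P : Finset ι} (hP : P.Nonempty) {e : ι → ι} (hmaps : Set.MapsTo e P P)
    (hinj : Set.InjOn e P) (hne : ∀ i ∈ P, e i ≠ i) : ∃ i ∈ P, G.Adj (a (e i)) (b i) := by
  by_contra! hnadj
  obtain ⟨i, hi⟩ := hP
  have hei : a (e i) ≠ b (e i) := hab.left_ne_right_of_not_adj hC (x := b i)
    (by rw [hab.color_right]; exact (hne i hi).symm) (fun h => hnadj i hi h.symm)
  have hcolors : C '' (b '' P) = P := by simp [Set.image_image, hab.color_right]
  have hmem : a (e i) ∉ b '' P := by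
    rintro ⟨k, -, hk⟩
    rcases eq_or_ne (e i) k with rfl | hik
    exacts [hei hk.symm, hab.left_ne_right hik hk.symm]
  obtain ⟨_, ⟨k, hk, rfl⟩, y, hy, hky, hadj⟩ := hC.exists_adj_of_injOn (hcolors ▸ hinj)
    (Set.mem_image_of_mem b hi) hmem (by rw [hab.color_left, hab.color_right])
    (by rw [hab.color_left, hab.color_right]; exact (hne i hi).symm)
  rw [hab.color_right] at hky
  have hya : y = a (e k) := ((hab _ y).1 hky).resolve_right fun h => hy ⟨e k, hmaps hk, h.symm⟩
  exact hnadj k hk (hya ▸ hadj.symm)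

theorem exists_forall_adj (hab : EnumeratesClasses C a b) (hC : IsUniqueColoring C)
    {X : Finset ι} (hX : X.Nonempty) : ∃ j ∈ X, ∀ k ∈ X, k ≠ j → G.Adj (a k) (b j) := by
  by_contra! hX'
  choose! e heX hene henadj using hX'
  obtain ⟨P, hPX, hP, hmaps, hinj⟩ := exists_subset_injOn_mapsTo hX heX
  obtain ⟨i, hi, hadj⟩ := hab.exists_adj_of_mapsTo hC hP hmaps hinj fun i hi => hene i (hPX hi)
  exact henadj i (hPX hi) hadj

theorem adj_left_right_of_not_adj (hab : EnumeratesClasses C a b) (hC : IsUniqueColoring C)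
    (hG : HasNoAntitriangle G) (hij : i ≠ j) (hnadj : ¬ G.Adj (a i) (a j)) : G.Adj (a i) (b j) := by
  have hj : a j ≠ b j :=
    hab.left_ne_right_of_not_adj hC (x := a i) (by rwa [hab.color_left]) hnadj
  exact hG.adj_of_not_adj (hab.left_ne_left hij) hj (hab.left_ne_right hij) hnadj
    fun h => C.valid h ((hab.color_left j).trans (hab.color_right j).symm)

end EnumeratesClasses

/-- A shallow clique minor with one branch set for each color in `S`, built from vertices with
colors in `S`, and with a root `a i`, `i ∈ S`, in every branch set. New branch sets need only
be adjacent to the roots. -/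
structure IsRootedMinor (C : G.Coloring ι) (a : ι → V) (S : Finset ι) (K : Finset (Finset V)) :
    Prop where
  isShallowCliqueMinor : IsShallowCliqueMinor G K
  card_eq : K.card = S.card
  color_mem : ∀ A ∈ K, ∀ v ∈ A, C v ∈ S
  exists_root_mem : ∀ A ∈ K, ∃ i ∈ S, a i ∈ A

namespace IsRootedMinor

variable {S : Finset ι} {K : Finset (Finset V)}

theorem disjoint_and_setsAdj (hK : IsRootedMinor C a S K) {A : Finset V}
    (hcolor : ∀ v ∈ A, C v ∉ S) (hadj : ∀ i ∈ S, ∃ v ∈ A, G.Adj v (a i)) :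
    ∀ B ∈ K, Disjoint A B ∧ SetsAdj G A B := by
  intro B hB
  obtain ⟨i, hi, hiB⟩ := hK.exists_root_mem B hB
  obtain ⟨v, hv, hvi⟩ := hadj i hi
  exact ⟨Finset.disjoint_left.2 fun x hxA hxB => hcolor x hxA (hK.color_mem B hB x hxB),
    v, hv, a i, hiB, hvi⟩

variable [DecidableEq V] [DecidableEq ι]

theorem insert_singleton (hK : IsRootedMinor C a S K) (hj : C (a j) = j) (hjS : j ∉ S)
    (hadj : ∀ i ∈ S, G.Adj (a j) (a i)) :
    IsRootedMinor C a (insert j S) (insert {a j} K) := by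
  have hnew : ∀ B ∈ K, Disjoint {a j} B ∧ SetsAdj G {a j} B :=
    hK.disjoint_and_setsAdj (by simpa [hj] using hjS) (by simpa using hadj)
  have hnotMem : {a j} ∉ K :=
    notMem_of_forall_disjoint (Finset.singleton_nonempty _) fun B hB => (hnew B hB).1
  refine ⟨hK.isShallowCliqueMinor.insert (Finset.singleton_nonempty _) (connSet_singleton _)
    (by simp) hnew, ?_, ?_, ?_⟩
  · rw [Finset.card_insert_of_notMem hnotMem, Finset.card_insert_of_notMem hjS, hK.card_eq]
  · grind [hK.color_mem]
  · grind [hK.exists_root_mem]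

theorem insert_pair (hK : IsRootedMinor C a S K) (hab : EnumeratesClasses C a b)
    (hjk : j ≠ k) (hjS : j ∉ S) (hkS : k ∉ S) (hj : a j ≠ b j) (hk : a k ≠ b k)
    (hajbk : G.Adj (a j) (b k)) (hakbj : G.Adj (a k) (b j)) (hbjbk : G.Adj (b j) (b k))
    (hajS : ∀ i ∈ S, G.Adj (a j) (a i) ∨ G.Adj (b k) (a i))
    (hbjS : ∀ i ∈ S, G.Adj (b j) (a i)) :
    IsRootedMinor C a (insert j (insert k S)) (insert {a j, b k} (insert {a k, b j} K)) := by
  have hdisj : Disjoint ({a j, b k} : Finset V) {a k, b j} := by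
    simp [hab.left_ne_left hjk.symm, hab.right_ne_right hjk, hj.symm, hk]
  have hnew₁ : ∀ B ∈ K, Disjoint {a k, b j} B ∧ SetsAdj G {a k, b j} B :=
    hK.disjoint_and_setsAdj (by simp [hab.color_left, hab.color_right, hjS, hkS])
      fun i hi => ⟨b j, by simp, hbjS i hi⟩
  have hnew₂ : ∀ B ∈ insert {a k, b j} K, Disjoint {a j, b k} B ∧ SetsAdj G {a j, b k} B := by
    refine (Finset.forall_mem_insert _ _ _).2
      ⟨⟨hdisj, b k, by simp, b j, by simp, hbjbk.symm⟩, hK.disjoint_and_setsAdj ?_ ?_⟩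
    · simp [hab.color_left, hab.color_right, hjS, hkS]
    · simpa using hajS
  have hnotMem₁ : {a k, b j} ∉ K :=
    notMem_of_forall_disjoint (Finset.insert_nonempty _ _) fun B hB => (hnew₁ B hB).1
  have hnotMem₂ : {a j, b k} ∉ insert {a k, b j} K :=
    notMem_of_forall_disjoint (Finset.insert_nonempty _ _) fun B hB => (hnew₂ B hB).1
  refine ⟨(hK.isShallowCliqueMinor.insert (Finset.insert_nonempty _ _) (connSet_pair hakbj)
    Finset.card_le_two hnew₁).insert (Finset.insert_nonempty _ _) (connSet_pair hajbk)
    Finset.card_le_two hnew₂, ?_, ?_, ?_⟩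
  · have hjkS : j ∉ insert k S := by simp [hjk, hjS]
    rw [Finset.card_insert_of_notMem hnotMem₂, Finset.card_insert_of_notMem hnotMem₁,
      Finset.card_insert_of_notMem hjkS, Finset.card_insert_of_notMem hkS, hK.card_eq]
  · grind [hK.color_mem, hab.color_left, hab.color_right]
  · grind [hK.exists_root_mem]

end IsRootedMinor

theorem IsUniqueColoring.exists_isRootedMinor (hC : IsUniqueColoring C) (hG : HasNoAntitriangle G)
    (hab : EnumeratesClasses C a b) (S : Finset ι) : ∃ K, IsRootedMinor C a S K := by
  classical
  induction S using Finset.strongInduction with | H S ih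
  obtain rfl | hS := S.eq_empty_or_nonempty
  · exact ⟨∅, isShallowCliqueMinor_empty, by simp, by simp, by simp⟩
  obtain ⟨j, hjS, hj⟩ := hab.exists_forall_adj hC hS
  by_cases hdominates : ∀ i ∈ S.erase j, G.Adj (a j) (a i)
  · obtain ⟨K, hK⟩ := ih (S.erase j) (Finset.erase_ssubset hjS)
    rw [← Finset.insert_erase hjS]
    exact ⟨_, hK.insert_singleton (hab.color_left j) (Finset.notMem_erase j S) hdominates⟩
  have hN : ((S.erase j).filter fun i => ¬ G.Adj (a j) (a i)).Nonempty := by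
    simpa only [Finset.filter_nonempty_iff, not_forall, exists_prop] using hdominates
  obtain ⟨k, hkN, hk⟩ := hab.exists_forall_adj hC hN
  simp only [Finset.mem_filter] at hkN hk
  obtain ⟨hkS, hnadj⟩ := hkN
  have hkj : k ≠ j := Finset.ne_of_mem_erase hkS
  have hnadj' : ¬ G.Adj (a k) (a j) := fun h => hnadj h.symm
  obtain ⟨K, hK⟩ := ih ((S.erase j).erase k)
    ((Finset.erase_ssubset hkS).trans (Finset.erase_ssubset hjS))
  rw [← Finset.insert_erase hjS, ← Finset.insert_erase hkS]
  refine ⟨_, hK.insert_pair hab hkj.symm (by simp) (by simp)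
    (hab.left_ne_right_of_not_adj hC (by rwa [hab.color_left]) hnadj')
    (hab.left_ne_right_of_not_adj hC (by rwa [hab.color_left, ne_comm]) hnadj)
    (hab.adj_left_right_of_not_adj hC hG hkj.symm hnadj)
    (hab.adj_left_right_of_not_adj hC hG hkj hnadj')
    (hab.adj_right_of_not_adj_left hC hkj.symm hnadj) (fun i hi => ?_) (fun i hi => ?_)⟩
  · obtain ⟨hik, hi⟩ := Finset.mem_erase.1 hi
    exact or_iff_not_imp_left.2 fun h => (hk i ⟨hi, h⟩ hik).symm
  · obtain ⟨hij, hi⟩ := Finset.mem_erase.1 (Finset.mem_of_mem_erase hi)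
    exact (hj i hi hij).symm

end UniqueColoring

section ColorPartition

variable {V : Type*} [Fintype V] [DecidableEq V] {G : SimpleGraph V} {c : Finset (Finset V)}

/-- A coloring in the sense of `IsColoring`, as a partition of the vertex set. -/
def IsColoring.finpartition (hc : IsColoring G c) : Finpartition (Finset.univ : Finset V) :=
  Finpartition.ofExistsUnique c (fun A _ => A.subset_univ)
    (fun v _ => by
      obtain ⟨A, hA, hvA⟩ := hc.2.2.1 v
      exact ⟨A, ⟨hA, hvA⟩, fun B hB => by_contra fun hBA =>
        Finset.disjoint_left.1 (hc.2.1 B hB.1 A hA hBA) hB.2 hvA⟩)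
    (fun hempty => Finset.not_nonempty_empty (hc.1 ∅ hempty))

/-- A coloring in the sense of `IsColoring`, as the vertex coloring sending each vertex to its
class. -/
def IsColoring.toColoring (hc : IsColoring G c) : G.Coloring c :=
  Coloring.mk (fun v => ⟨hc.finpartition.part v, hc.finpartition.part_mem.2 (Finset.mem_univ v)⟩)
    fun {v w} hvw heq => by
      have hpart : hc.finpartition.part v = hc.finpartition.part w := congrArg Subtype.val heq
      exact hc.2.2.2 _ (hc.finpartition.part_mem.2 (Finset.mem_univ v)) v (by simp) w
        (by simp [hpart]) hvw

theorem IsColoring.toColoring_eq_iff (hc : IsColoring G c) {v w : V} :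
    hc.toColoring v = hc.toColoring w ↔ hc.finpartition.part v = hc.finpartition.part w :=
  Subtype.ext_iff

theorem IsColoring.toColoring_surjective (hc : IsColoring G c) :
    Function.Surjective hc.toColoring := by
  rintro ⟨A, hA⟩
  obtain ⟨v, -, hv⟩ := hc.finpartition.part_surjOn hA
  exact ⟨v, Subtype.ext hv⟩

variable {ι : Type*}

theorem card_parts_ofSetoid_ker_le [Fintype ι] (f : V → ι)
    [DecidableRel (Setoid.ker f)] :
    (Finpartition.ofSetoid (Setoid.ker f)).parts.card ≤ Fintype.card ι := by
  classical
  have hparts : (Finpartition.ofSetoid (Setoid.ker f)).parts =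
      (Finset.univ.image f).image fun i => Finset.univ.filter fun v => i = f v := by
    rw [Finset.image_image]
    exact Finset.image_congr fun v _ => by ext; simp [Setoid.ker_def]
  rw [hparts]
  exact Finset.card_image_le.trans (Finset.card_le_univ _)

theorem isColoring_parts_ofSetoid_ker (D : G.Coloring ι) [DecidableRel (Setoid.ker D)] :
    IsColoring G (Finpartition.ofSetoid (Setoid.ker D)).parts := by
  set P := Finpartition.ofSetoid (Setoid.ker D)
  refine ⟨fun A hA => P.nonempty_of_mem_parts hA, fun A hA B hB hAB => P.disjoint hA hB hAB,
    fun v => ⟨P.part v, P.part_mem.2 (Finset.mem_univ v), P.mem_part (Finset.mem_univ v)⟩, ?_⟩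
  intro A hA x hx y hy hxy
  rw [← P.part_eq_of_mem hA hx, Finpartition.mem_part_ofSetoid_iff_rel] at hy
  exact D.valid hxy hy

theorem MinColoring.isUniqueColoring (hmin : MinColoring G c)
    (huniq : ∀ d, IsColoring G d → d.card = c.card → d = c) :
    IsUniqueColoring hmin.1.toColoring := by
  classical
  intro D
  set P := Finpartition.ofSetoid (Setoid.ker D)
  have hPcol : IsColoring G P.parts := isColoring_parts_ofSetoid_ker D
  have hPcard : P.parts.card ≤ c.card := by
    simpa only [Fintype.card_coe] using card_parts_ofSetoid_ker_le D
  have hP : P = hmin.1.finpartition :=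
    Finpartition.ext (huniq _ hPcol (hPcard.antisymm (hmin.2 _ hPcol)))
  ext v w
  rw [← Finpartition.mem_part_ofSetoid_iff_rel (s := Setoid.ker D), Setoid.ker_def,
    hmin.1.toColoring_eq_iff, ← hP, eq_comm]
  exact P.mem_part_iff_part_eq_part (Finset.mem_univ w) (Finset.mem_univ v)

end ColorPartition

/-- no antitriangle and a unique minimum coloring force a shallow
clique minor of size `χ(G)`; in particular `s(G) ≥ |V(G)|/2`. -/
theorem unique_coloring_shallow_clique_minor {V : Type*} [Fintype V] [DecidableEq V]
    (G : SimpleGraph V) (hat : HasNoAntitriangle G) (c : Finset (Finset V))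
    (hmin : MinColoring G c)
    (huniq : ∀ d, IsColoring G d → d.card = c.card → d = c) :
    ∃ K : Finset (Finset V), IsShallowCliqueMinor G K ∧ K.card = c.card ∧
      2 * K.card ≥ Fintype.card V := by
  have hunique : IsUniqueColoring hmin.1.toColoring := hmin.isUniqueColoring huniq
  obtain ⟨a, b, hab⟩ := hat.exists_enumeratesClasses hmin.1.toColoring_surjective
  obtain ⟨K, hK⟩ := hunique.exists_isRootedMinor hat hab Finset.univ
  have hcard : K.card = c.card := by simpa using hK.card_eq
  refine ⟨K, hK.isShallowCliqueMinor, hcard, ?_⟩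
  simpa [hcard] using hab.card_le_two_mul
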